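/- Let C ⊆ 𝔽_q^N be a code with at least two codewords, and let d_{(P,w,π)}(C) and d_{(P,π)}(C) be its minimum distances with respect to the (P,w,π)-metric and the (P,π)-metric respectively. Then ⌊(d_{(P,w,π)}(C)−1)/M_w⌋ ≤ d_{(P,π)}(C) − 1. -/

import Mathlib

open scoped Classical

noncomputable section

variable {F : Type*} [Field F] [Fintype F]
variable {ι : Type*} [Fintype ι] [PartialOrder ι]

/-- The block weight induced by `w`: the maximum of the weights of the coordinates. -/
def blockWt (w : F → ℕ) {m : ℕ} (v : Fin m → F) : ℕ :=
  Finset.univ.sup fun t => w (v t)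

/-- `M_w`, the maximum weight of an element of `F`. -/
def maxWt (w : F → ℕ) : ℕ := Finset.univ.sup w

/-- `D_r = {α ∈ F : w(α) = r}`. -/
def Dset (w : F → ℕ) (r : ℕ) : Finset F := Finset.univ.filter fun a => w a = r

/-- `D_r^k = {v ∈ F^k : w̃^k(v) = r}`. -/
def Dk (w : F → ℕ) (m r : ℕ) : Finset (Fin m → F) :=
  Finset.univ.filter fun v => blockWt w v = r

/-- The order ideal (down-set) of the poset generated by a finite set `A`. -/
def genIdeal (A : Finset ι) : Finset ι := Finset.univ.filter fun i => ∃ j ∈ A, i ≤ j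

/-- The set of maximal elements of a finite set `I`. -/
def maxElems (I : Finset ι) : Finset ι := I.filter fun i => ∀ j ∈ I, i ≤ j → j = i

/-- `I` is an order ideal (down-set) of the poset. -/
def IsIdeal (I : Finset ι) : Prop := ∀ a b : ι, a ≤ b → b ∈ I → a ∈ I

/-- The collection `𝓘_j^i` of ideals of cardinality `i` with exactly `j` maximal elements. -/
def idealsWithMax (ι : Type*) [Fintype ι] [PartialOrder ι] (j i : ℕ) : Finset (Finset ι) :=
  Finset.univ.filter fun I => IsIdeal I ∧ I.card = i ∧ (maxElems I).card = j

/-- The π-support of a block vector. -/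
def suppPi (k : ι → ℕ) (x : ∀ i, Fin (k i) → F) : Finset ι :=
  Finset.univ.filter fun i => x i ≠ 0

/-- The `(P,w,π)`-weight. -/
def wtP (w : F → ℕ) (k : ι → ℕ) (x : ∀ i, Fin (k i) → F) : ℕ :=
  ∑ i ∈ maxElems (genIdeal (suppPi k x)), blockWt w (x i)
    + maxWt w * ((genIdeal (suppPi k x)) \ maxElems (genIdeal (suppPi k x))).card

/-- The `(P,w,π)`-distance. -/
def dP (w : F → ℕ) (k : ι → ℕ) (x y : ∀ i, Fin (k i) → F) : ℕ := wtP w k (x - y)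

/-- The `(P,π)`-weight: the cardinality of the ideal generated by the π-support. -/
def wtPpi (k : ι → ℕ) (x : ∀ i, Fin (k i) → F) : ℕ := (genIdeal (suppPi k x)).card

/-!
Each element of the ideal `⟨supp_π(x)⟩` contributes at most `M_w` to the `(P,w,π)`-weight of `x` and
exactly `1` to its `(P,π)`-weight, so `d_{(P,w,π)} ≤ M_w · d_{(P,π)}` pointwise. Evaluating this at
two codewords that attain the `(P,π)`-minimum distance gives the same inequality for the minimum
distances, and the floor bound is that inequality rewritten for natural numbers.
-/

theorem sub_one_div_le_sub_one_of_le_mul {a b m : ℕ} (h : a ≤ m * b) : (a - 1) / m ≤ b - 1 := by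
  rcases a.eq_zero_or_pos with rfl | ha
  · simp
  · exact Nat.le_sub_one_of_lt (Nat.div_lt_of_lt_mul (by lia))

section MinDist

variable {α : Type*} {d d' : α → α → ℕ} {C : Set α}

/-- The minimum distance of a code `C` with respect to `d`: the least value of `d` on pairs of
distinct codewords. It has the junk value `0` if `C` has at most one element. -/
def minDist (d : α → α → ℕ) (C : Set α) : ℕ :=
  sInf {s : ℕ | ∃ c₁ ∈ C, ∃ c₂ ∈ C, c₁ ≠ c₂ ∧ d c₁ c₂ = s}

theorem minDist_le {x y : α} (hx : x ∈ C) (hy : y ∈ C) (hxy : x ≠ y) : minDist d C ≤ d x y :=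
  Nat.sInf_le ⟨x, hx, y, hy, hxy, rfl⟩

theorem exists_eq_minDist (d : α → α → ℕ) (hC : C.Nontrivial) :
    ∃ x ∈ C, ∃ y ∈ C, x ≠ y ∧ d x y = minDist d C := by
  obtain ⟨x, hx, y, hy, hxy⟩ := hC
  exact Nat.sInf_mem (s := {s | ∃ c₁ ∈ C, ∃ c₂ ∈ C, c₁ ≠ c₂ ∧ d c₁ c₂ = s})
    ⟨d x y, x, hx, y, hy, hxy, rfl⟩

theorem minDist_le_apply_minDist {f : ℕ → ℕ} (h : ∀ x y, d x y ≤ f (d' x y))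
    (hC : C.Nontrivial) : minDist d C ≤ f (minDist d' C) := by
  obtain ⟨x, hx, y, hy, hxy, hmin⟩ := exists_eq_minDist d' hC
  calc
    minDist d C ≤ d x y := minDist_le hx hy hxy
    _ ≤ f (d' x y) := h x y
    _ = f (minDist d' C) := by rw [hmin]

end MinDist

/-- The `(P,π)`-distance, the counterpart of `dP` for the weight `wtPpi`. -/
def dPpi (k : ι → ℕ) (x y : ∀ i, Fin (k i) → F) : ℕ := wtPpi k (x - y)

omit [Field F] in
theorem blockWt_le_maxWt (w : F → ℕ) {m : ℕ} (v : Fin m → F) : blockWt w v ≤ maxWt w :=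
  Finset.sup_le fun t _ => Finset.le_sup (f := w) (Finset.mem_univ (v t))

theorem maxElems_subset (I : Finset ι) : maxElems I ⊆ I :=
  Finset.filter_subset _ I

theorem wtP_le_maxWt_mul_wtPpi (w : F → ℕ) (k : ι → ℕ) (x : ∀ i, Fin (k i) → F) :
    wtP w k x ≤ maxWt w * wtPpi k x := by
  set I := genIdeal (suppPi k x)
  have hmax : ∑ i ∈ maxElems I, blockWt w (x i) ≤ (maxElems I).card * maxWt w :=
    Finset.sum_le_card_nsmul _ _ _ fun i _ => blockWt_le_maxWt w (x i)
  calc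
    wtP w k x = ∑ i ∈ maxElems I, blockWt w (x i) + maxWt w * (I \ maxElems I).card := rfl
    _ ≤ (maxElems I).card * maxWt w + maxWt w * (I \ maxElems I).card := by gcongr
    _ = maxWt w * ((I \ maxElems I).card + (maxElems I).card) := by ring
    _ = maxWt w * wtPpi k x := by
      rw [Finset.card_sdiff_add_card_eq_card (maxElems_subset I), wtPpi]

theorem stmt16_general (w : F → ℕ) (k : ι → ℕ) {C : Set (∀ i, Fin (k i) → F)}
    (hC : C.Nontrivial) : minDist (dP w k) C ≤ maxWt w * minDist (dPpi k) C :=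
  minDist_le_apply_minDist (fun x y => wtP_le_maxWt_mul_wtPpi w k (x - y)) hC

/-- `⌊(d_{(P,w,π)}(C) - 1)/M_w⌋ ≤ d_{(P,π)}(C) - 1` for any code `C` with at
least two codewords. -/
theorem stmt16 (w : F → ℕ) (hw0 : ∀ a : F, w a = 0 ↔ a = 0)
    (hwneg : ∀ a : F, w (-a) = w a) (hwadd : ∀ a b : F, w (a + b) ≤ w a + w b)
    (k : ι → ℕ) (C : Finset (∀ i, Fin (k i) → F)) (hC : 2 ≤ C.card)
    (dw dpi : ℕ)
    (hdw : dw = sInf {s : ℕ | ∃ c₁ ∈ C, ∃ c₂ ∈ C, c₁ ≠ c₂ ∧ wtP w k (c₁ - c₂) = s})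
    (hdpi : dpi = sInf {s : ℕ | ∃ c₁ ∈ C, ∃ c₂ ∈ C, c₁ ≠ c₂ ∧ wtPpi k (c₁ - c₂) = s}) :
    (dw - 1) / maxWt w ≤ dpi - 1 := by
  subst hdw hdpi
  exact sub_one_div_le_sub_one_of_le_mul
    (stmt16_general w k (Finset.one_lt_card_iff_nontrivial.mp hC))
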